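/- arXiv:2308.10394 — 6 statements merged into one kernel-verified Lean document; each statement's English description precedes it below -/
import Mathlib

section
/- For every subgroup G of the symmetric group S_n and every block partition 𝓑 for G, the automorphism group Aut(U_{G⋌𝓑}) of the ordered set U_{G⋌𝓑} is isomorphic to G via the restriction map Ψ ↦ Ψ|_T; that is, every automorphism Ψ of U_{G⋌𝓑} maps T onto itself, the map Ψ ↦ Ψ|_T is an injective group homomorphism from Aut(U_{G⋌𝓑}) into G, and every σ ∈ G arises as Ψ|_T for some automorphism Ψ. -/
/-!
`G` acts on `U_{G⋌𝓑}` by left composition, `σ` taking `1` in the copy of `G` to `σ`. So the theorem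
amounts to rigidity: an automorphism `Ψ` fixing that point is the identity.

For `n ≥ 1`, `Ψ` preserves the coheight, which is `0` on `T`, `1` on the cells, `2` on the `u_j` and
on `G`, and `3` on the `ℓ_j`; as the elements of `G` are minimal and the `u_j` are not, `Ψ`
preserves each of the five kinds of points. It then induces permutations `a` and `b` of the indices
of the `ℓ_j` and the `u_j`. The edge `ℓ_i < u_i` gives `b i ≤ a i`, which forces `a = b`, and the
edge `ℓ_{i+1} < u_i` gives `a (i + 1) = a i + 1`, which forces `a = 1`: the fence is fixed.

Since `𝓑` partitions `T`, the cell `(j, θ|_B)` is the only one above both `u_j` and `θ`, and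
`θ j` is the only point of `T` above it. So if `Ψ` maps `θ` to `θ'`, it maps `(j, θ|_B)` to
`(j, θ'|_B)` and `θ j` to `θ' j`. For `θ = θ' = 1` this fixes `T`, and then `θ' = θ` in general.
-/

/-- The set of restrictions `θ|_B` (as functions `B → Fin n`) of elements `θ ∈ G`
to blocks `B ∈ 𝓑`, i.e. `⋃_{B ∈ 𝓑} G|_B`. -/
def Restr (n : ℕ) (G : Subgroup (Equiv.Perm (Fin n))) (𝓑 : Set (Set (Fin n))) :
    Set ((B : Set (Fin n)) × (B → Fin n)) :=
  { p | p.1 ∈ 𝓑 ∧ ∃ θ ∈ G, p.2 = fun x => θ x.1 }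

/-- The underlying set of the ordered set `U_{G⋌𝓑}`:
the fence `F = {ℓ_1,u_1,…,ℓ_n,u_n}` (constructors `low`, `up`), the copy of `G`
(constructor `grp`), the sets `D^μ = dom(μ) × {μ}` (constructor `cell`), and the
copy of `T = {1,…,n}` (constructor `pt`). -/
inductive UPt (n : ℕ) (G : Subgroup (Equiv.Perm (Fin n))) (𝓑 : Set (Set (Fin n))) where
  | low : Fin n → UPt n G 𝓑
  | up : Fin n → UPt n G 𝓑
  | grp : G → UPt n G 𝓑
  | cell : (μ : Restr n G 𝓑) → (j : μ.1.1) → UPt n G 𝓑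
  | pt : Fin n → UPt n G 𝓑

/-- The generating strict comparabilities of `U_{G⋌𝓑}`:
`ℓ_i < u_i`, `ℓ_{i+1} < u_i`, `u_j < (j,μ)`, `(j,μ) < μ(j)`, and `θ < (j, θ|_B)`. -/
inductive UStep (n : ℕ) (G : Subgroup (Equiv.Perm (Fin n))) (𝓑 : Set (Set (Fin n))) :
    UPt n G 𝓑 → UPt n G 𝓑 → Prop where
  | fence_eq (i : Fin n) : UStep n G 𝓑 (.low i) (.up i)
  | fence_succ (i j : Fin n) (h : (j : ℕ) = (i : ℕ) + 1) : UStep n G 𝓑 (.low j) (.up i)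
  | up_cell (μ : Restr n G 𝓑) (j : μ.1.1) : UStep n G 𝓑 (.up j.1) (.cell μ j)
  | cell_pt (μ : Restr n G 𝓑) (j : μ.1.1) : UStep n G 𝓑 (.cell μ j) (.pt (μ.1.2 j))
  | grp_cell (θ : G) (μ : Restr n G 𝓑) (j : μ.1.1)
      (h : ∀ x : μ.1.1, μ.1.2 x = (θ : Equiv.Perm (Fin n)) x.1) :
      UStep n G 𝓑 (.grp θ) (.cell μ j)

/-- Rank function used to prove antisymmetry of the generated order. -/
def UPt.rank {n : ℕ} {G : Subgroup (Equiv.Perm (Fin n))} {𝓑 : Set (Set (Fin n))} :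
    UPt n G 𝓑 → ℕ
  | .low _ => 0
  | .grp _ => 0
  | .up _ => 1
  | .cell _ _ => 2
  | .pt _ => 3

theorem UStep.rank_lt {n : ℕ} {G : Subgroup (Equiv.Perm (Fin n))} {𝓑 : Set (Set (Fin n))}
    {x y : UPt n G 𝓑} (h : UStep n G 𝓑 x y) : x.rank < y.rank := by
  cases h <;> simp [UPt.rank]

/-- The order of `U_{G⋌𝓑}`: the reflexive-transitive closure of the generating
comparabilities. -/
instance UPt.instPartialOrder (n : ℕ) (G : Subgroup (Equiv.Perm (Fin n)))
    (𝓑 : Set (Set (Fin n))) : PartialOrder (UPt n G 𝓑) where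
  le := Relation.ReflTransGen (UStep n G 𝓑)
  le_refl _ := Relation.ReflTransGen.refl
  le_trans _ _ _ := Relation.ReflTransGen.trans
  le_antisymm a b hab hba := by
    have mono : ∀ {x y : UPt n G 𝓑}, Relation.ReflTransGen (UStep n G 𝓑) x y →
        x.rank ≤ y.rank := by
      intro x y h
      induction h with
      | refl => exact le_rfl
      | tail _ h2 ih => exact ih.trans h2.rank_lt.le
    rcases hab.cases_head with h | ⟨c, hc, hcb⟩
    · exact h
    rcases hba.cases_head with h | ⟨d, hd, hda⟩
    · exact h.symm
    have h1 := hc.rank_lt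
    have h2 := mono hcb
    have h3 := hd.rank_lt
    have h4 := mono hda
    omega

/-- `B` is a block for `G`: for every `σ ∈ G`, `σ[B] ∩ B ≠ ∅` implies `σ[B] = B`. -/
def IsBlockOf (n : ℕ) (G : Subgroup (Equiv.Perm (Fin n))) (B : Set (Fin n)) : Prop :=
  ∀ σ ∈ G, ((σ : Equiv.Perm (Fin n)) '' B ∩ B).Nonempty → (σ : Equiv.Perm (Fin n)) '' B = B

/-- A block partition `𝓑 = ⋃_{j=1}^ℓ G·B_j` for `G` with orbit cut `{B_1,…,B_ℓ}`
(the `B_j` are the `cut j`): the `B_j` are nonempty blocks, the family of all images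
`σ[B_i]` (`σ ∈ G`) partitions `{1,…,n}`, and distinct members of the orbit cut lie in
distinct `G`-orbits of blocks. -/
structure BlockPartition (n : ℕ) (G : Subgroup (Equiv.Perm (Fin n))) where
  ℓ : ℕ
  cut : Fin ℓ → Set (Fin n)
  nonempty_cut : ∀ i, (cut i).Nonempty
  isBlock_cut : ∀ i, IsBlockOf n G (cut i)
  partitions : ∀ x : Fin n,
    ∃! C : Set (Fin n), (∃ i, ∃ σ ∈ G, (σ : Equiv.Perm (Fin n)) '' cut i = C) ∧ x ∈ C
  cut_distinct_orbits : ∀ i j : Fin ℓ, ∀ σ ∈ G,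
    (σ : Equiv.Perm (Fin n)) '' cut i = cut j → i = j

/-- The block partition `𝓑 = ⋃_{j=1}^ℓ G·B_j` as a set of subsets of `{1,…,n}`. -/
def BlockPartition.blocks {n : ℕ} {G : Subgroup (Equiv.Perm (Fin n))}
    (P : BlockPartition n G) : Set (Set (Fin n)) :=
  { C | ∃ i, ∃ σ ∈ G, (σ : Equiv.Perm (Fin n)) '' P.cut i = C }

/-- Composition `σ ∘ μ` of a restriction `μ = θ|_B` with `σ ∈ G`; this is the
restriction `(σθ)|_B`. -/
def Restr.comp {n : ℕ} {G : Subgroup (Equiv.Perm (Fin n))} {𝓑 : Set (Set (Fin n))}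
    (σ : G) (μ : Restr n G 𝓑) : Restr n G 𝓑 :=
  ⟨⟨μ.1.1, fun x => (σ : Equiv.Perm (Fin n)) (μ.1.2 x)⟩, by
    obtain ⟨hB, θ, hθ, hf⟩ := μ.2
    refine ⟨hB, (σ : Equiv.Perm (Fin n)) * θ, mul_mem σ.2 hθ, ?_⟩
    funext x
    simp [hf]⟩

theorem perm_eq_one_of_le_apply {α : Type*} [PartialOrder α] {p : Equiv.Perm α}
    (hp : IsOfFinOrder p) (h : ∀ x, x ≤ p x) : p = 1 := by
  ext x
  obtain ⟨k, hk⟩ := Nat.exists_eq_succ_of_ne_zero hp.orderOf_pos.ne'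
  have hcycle : p^[k] (p x) = x := by
    rw [← Function.iterate_succ_apply, ← hk, Equiv.Perm.iterate_eq_pow, pow_orderOf_eq_one,
      Equiv.Perm.one_apply]
  have hback : p x ≤ p^[k] (p x) := Function.id_le_iterate_of_id_le h k (p x)
  exact le_antisymm (hback.trans_eq hcycle) (h x)

theorem eq_of_le_of_injective {α : Type*} [Finite α] [PartialOrder α] {f g : α → α}
    (hf : Function.Injective f) (hg : Function.Injective g) (h : f ≤ g) : f = g := by
  let p := Equiv.ofBijective f (Finite.injective_iff_bijective.1 hf)
  let q := Equiv.ofBijective g (Finite.injective_iff_bijective.1 hg)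
  have hle : ∀ x, x ≤ (q * p⁻¹) x := fun x => by
    simpa [p, q] using (p.apply_symm_apply x).symm.le.trans (h (p.symm x))
  have hpq : q = p := mul_inv_eq_one.1 (perm_eq_one_of_le_apply (isOfFinOrder_of_finite _) hle)
  exact (congrArg DFunLike.coe hpq).symm

theorem eq_id_of_fence_hom {n : ℕ} {a b : Fin n → Fin n}
    (ha : Function.Injective a) (hb : Function.Injective b)
    (h : ∀ i j : Fin n, i = j ∨ (i : ℕ) = j + 1 → a i = b j ∨ (a i : ℕ) = b j + 1) :
    a = id ∧ b = id := by
  have hba : b = a := eq_of_le_of_injective hb ha fun i => by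
    have hedge := h i i (.inl rfl)
    rw [Fin.ext_iff] at hedge
    exact Fin.le_def.2 (by omega)
  subst hba
  have hle : ∀ k (hk : k < n), k ≤ b ⟨k, hk⟩ := fun k => by
    induction k with
    | zero => exact fun _ => Nat.zero_le _
    | succ k ih =>
      intro hk
      have hne : b ⟨k + 1, hk⟩ ≠ b ⟨k, by omega⟩ := hb.ne (by simp)
      have hsucc := (h ⟨k + 1, hk⟩ ⟨k, by omega⟩ (.inr rfl)).resolve_left hne
      have hk_le := ih (by omega)
      omega
  have hid : b = id := (eq_of_le_of_injective Function.injective_id hb fun i => hle i i.2).symm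
  exact ⟨hid, hid⟩

theorem UStep.le {n : ℕ} {G : Subgroup (Equiv.Perm (Fin n))} {𝓑 : Set (Set (Fin n))}
    {x y : UPt n G 𝓑} (h : UStep n G 𝓑 x y) : x ≤ y :=
  Relation.ReflTransGen.single h

theorem UStep.lt {n : ℕ} {G : Subgroup (Equiv.Perm (Fin n))} {𝓑 : Set (Set (Fin n))}
    {x y : UPt n G 𝓑} (h : UStep n G 𝓑 x y) : x < y :=
  h.le.lt_of_ne fun e => h.rank_lt.ne (congrArg UPt.rank e)

namespace UPt

variable {n : ℕ} {G : Subgroup (Equiv.Perm (Fin n))} {𝓑 : Set (Set (Fin n))}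

section Order

/-- The coheight of a point of `U_{G⋌𝓑}`, when `𝓑` covers `T` and `n ≥ 1`, as an explicit function.
Unlike `UPt.rank` it drops by exactly one along each generating comparability. -/
def colevel : UPt n G 𝓑 → ℕ
  | .low _ => 3
  | .up _ => 2
  | .grp _ => 2
  | .cell _ _ => 1
  | .pt _ => 0

theorem exists_step_le_of_lt {x y : UPt n G 𝓑} (h : x < y) : ∃ z, UStep n G 𝓑 x z ∧ z ≤ y :=
  (Relation.ReflTransGen.cases_head h.le).resolve_left h.ne

theorem colevel_strictAnti : StrictAnti (colevel : UPt n G 𝓑 → ℕ) := by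
  have colevel_lt {x y : UPt n G 𝓑} (h : UStep n G 𝓑 x y) : y.colevel < x.colevel := by
    cases h <;> simp [colevel]
  have colevel_le {x y : UPt n G 𝓑} (h : x ≤ y) : y.colevel ≤ x.colevel := by
    induction (h : Relation.ReflTransGen (UStep n G 𝓑) x y) with
    | refl => exact le_rfl
    | tail _ hstep ih => exact (colevel_lt hstep).le.trans ih
  intro x y h
  obtain ⟨z, hxz, hzy⟩ := exists_step_le_of_lt h
  exact (colevel_le hzy).trans_lt (colevel_lt hxz)

theorem step_of_le {x y : UPt n G 𝓑} (h : x ≤ y) (hlevel : x.colevel = y.colevel + 1) :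
    UStep n G 𝓑 x y := by
  have hlt : x < y := h.lt_of_ne (by rintro rfl; omega)
  obtain ⟨z, hxz, hzy⟩ := exists_step_le_of_lt hlt
  have hz : z = y := hzy.eq_of_not_lt fun hzy => by
    have hxz_level := colevel_strictAnti hxz.lt
    have hzy_level := colevel_strictAnti hzy
    omega
  exact hz ▸ hxz

theorem low_le_up_iff {i j : Fin n} :
    (low i : UPt n G 𝓑) ≤ up j ↔ i = j ∨ (i : ℕ) = j + 1 := by
  refine ⟨fun h => ?_, ?_⟩
  · cases step_of_le h rfl with
    | fence_eq => exact .inl rfl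
    | fence_succ _ _ h => exact .inr h
  · rintro (rfl | h)
    · exact (UStep.fence_eq _).le
    · exact (UStep.fence_succ _ _ h).le

theorem eq_of_up_le_cell {i : Fin n} {μ : Restr n G 𝓑} {j : μ.1.1}
    (h : up i ≤ cell μ j) : i = j := by
  cases step_of_le h rfl
  rfl

theorem eq_of_cell_le_pt {μ : Restr n G 𝓑} {j : μ.1.1} {i : Fin n}
    (h : cell μ j ≤ pt i) : i = μ.1.2 j := by
  cases step_of_le h rfl
  rfl

theorem apply_eq_of_grp_le_cell {θ : G} {μ : Restr n G 𝓑} {j : μ.1.1}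
    (h : grp θ ≤ cell μ j) (x : μ.1.1) : μ.1.2 x = (θ : Equiv.Perm (Fin n)) x := by
  cases step_of_le h rfl with
  | grp_cell _ _ _ hf => exact hf x

theorem isMin_grp (θ : G) : IsMin (grp θ : UPt n G 𝓑) := by
  intro x h
  rcases Relation.ReflTransGen.cases_tail h with h | ⟨_, _, h⟩
  · exact h.le
  · cases h

theorem not_isMin_up (i : Fin n) : ¬ IsMin (up i : UPt n G 𝓑) :=
  not_isMin_of_lt (UStep.fence_eq i).lt

end Order

section Cell

/-- The cell `(j, θ|_B)` of `U_{G⋌𝓑}`. -/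
def cellOf (θ : G) {B : Set (Fin n)} (hB : B ∈ 𝓑) {j : Fin n} (hj : j ∈ B) : UPt n G 𝓑 :=
  .cell ⟨⟨B, fun x => (θ : Equiv.Perm (Fin n)) x⟩, hB, θ, θ.2, rfl⟩ ⟨j, hj⟩

theorem exists_eq_cellOf (μ : Restr n G 𝓑) (j : μ.1.1) : ∃ θ, cell μ j = cellOf θ μ.2.1 j.2 := by
  obtain ⟨⟨B, f⟩, hB, θ, hθ, hf⟩ := μ
  obtain rfl : f = fun x : B => θ x := hf
  exact ⟨⟨θ, hθ⟩, rfl⟩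

variable (θ : G) {B : Set (Fin n)} (hB : B ∈ 𝓑) {j : Fin n} (hj : j ∈ B)

theorem up_lt_cellOf : up j < cellOf θ hB hj :=
  UStep.lt (.up_cell _ ⟨j, hj⟩)

theorem grp_lt_cellOf : grp θ < cellOf θ hB hj :=
  UStep.lt (.grp_cell _ _ _ fun _ => rfl)

theorem cellOf_lt_pt : cellOf θ hB hj < pt ((θ : Equiv.Perm (Fin n)) j) :=
  UStep.lt (.cell_pt _ ⟨j, hj⟩)

variable {θ hB hj}

theorem eq_cellOf (h𝓑 : ∀ j, ∃! B ∈ 𝓑, j ∈ B) {c : UPt n G 𝓑} (hc : c.colevel = 1)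
    (hup : up j ≤ c) (hgrp : grp θ ≤ c) : c = cellOf θ hB hj := by
  cases c with
  | cell μ i =>
    obtain ⟨⟨C, f⟩, hC, _⟩ := μ
    obtain rfl := eq_of_up_le_cell hup
    obtain rfl : C = B := (h𝓑 i).unique ⟨hC, i.2⟩ ⟨hB, hj⟩
    obtain rfl : f = fun x : C => (θ : Equiv.Perm (Fin n)) x :=
      funext (apply_eq_of_grp_le_cell hgrp)
    rfl
  | _ => simp [colevel] at hc

end Cell

section Action

/-- `G` acts on `U_{G⋌𝓑}` by left composition on `G`, on the restrictions and on `T`; the fence is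
fixed. -/
instance : MulAction G (UPt n G 𝓑) where
  smul σ
    | .low i => .low i
    | .up i => .up i
    | .grp θ => .grp (σ * θ)
    | .cell μ j => .cell (Restr.comp σ μ) j
    | .pt i => .pt ((σ : Equiv.Perm (Fin n)) i)
  one_smul x := by cases x <;> simp [HSMul.hSMul, Restr.comp]
  mul_smul σ τ x := by cases x <;> simp [HSMul.hSMul, Restr.comp, mul_assoc]

theorem smul_mono (σ : G) : Monotone (σ • · : UPt n G 𝓑 → UPt n G 𝓑) := by
  intro x y h
  refine Relation.ReflTransGen.lift (σ • ·) (fun x y hxy => ?_) _ _ h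
  cases hxy with
  | fence_eq i => exact .fence_eq i
  | fence_succ i j h => exact .fence_succ i j h
  | up_cell μ j => exact .up_cell (Restr.comp σ μ) j
  | cell_pt μ j => exact .cell_pt (Restr.comp σ μ) j
  | grp_cell θ μ j h => exact .grp_cell (σ * θ) (Restr.comp σ μ) j fun x => congrArg σ.1 (h x)

/-- The action of `G` on `U_{G⋌𝓑}`, as a homomorphism into the automorphism group. -/
def toOrderIsoHom : G →* (UPt n G 𝓑 ≃o UPt n G 𝓑) where
  toFun σ := (MulAction.toPerm σ).toOrderIso (smul_mono σ) (smul_mono σ⁻¹)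
  map_one' := by ext x; exact one_smul G x
  map_mul' σ τ := by ext x; exact mul_smul σ τ x

theorem toOrderIsoHom_grp (σ θ : G) : toOrderIsoHom (𝓑 := 𝓑) σ (grp θ) = grp (σ * θ) :=
  rfl

theorem toOrderIsoHom_pt (σ : G) (i : Fin n) :
    toOrderIsoHom (𝓑 := 𝓑) σ (pt i) = pt ((σ : Equiv.Perm (Fin n)) i) :=
  rfl

theorem toOrderIsoHom_injective : Function.Injective (toOrderIsoHom (G := G) (𝓑 := 𝓑)) :=
  fun σ τ h => by
    simpa [toOrderIsoHom_grp] using DFunLike.congr_fun h (grp 1)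

end Action

section Rigidity

variable (h𝓑 : ∀ j, ∃! B ∈ 𝓑, j ∈ B) (Ψ : UPt n G 𝓑 ≃o UPt n G 𝓑)

theorem coheight_eq_colevel [NeZero n] (hcover : ∀ j, ∃ B ∈ 𝓑, j ∈ B) (x : UPt n G 𝓑) :
    Order.coheight x = x.colevel := by
  have lower {x y : UPt n G 𝓑} {k : ℕ} (hxy : x < y) (hy : k ≤ Order.coheight y) :
      (k + 1 : ℕ) ≤ Order.coheight x := by
    exact_mod_cast (add_le_add_left hy 1).trans (Order.coheight_add_one_le hxy)
  have lower_cell (μ : Restr n G 𝓑) (j : μ.1.1) : (1 : ℕ) ≤ Order.coheight (cell μ j) :=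
    lower (UStep.cell_pt μ j).lt zero_le
  have lower_up (j : Fin n) : (2 : ℕ) ≤ Order.coheight (up j : UPt n G 𝓑) := by
    obtain ⟨B, hB, hj⟩ := hcover j
    exact lower (up_lt_cellOf 1 hB hj) (lower_cell _ _)
  refine le_antisymm ?_ ?_
  · simpa using Order.coheight_le_coheight_apply_of_strictMono
      (OrderDual.toDual ∘ colevel) (fun _ _ h => colevel_strictAnti h) x
  · cases x with
    | low i => exact lower (UStep.fence_eq i).lt (lower_up i)
    | up i => exact lower_up i
    | grp θ =>
      obtain ⟨B, hB, hj⟩ := hcover 0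
      exact lower (grp_lt_cellOf θ hB hj) (lower_cell _ _)
    | cell μ j => exact lower_cell μ j
    | pt i => exact zero_le

include h𝓑

theorem colevel_map (x : UPt n G 𝓑) : (Ψ x).colevel = x.colevel := by
  obtain rfl | hn := eq_or_ne n 0
  -- Here coheight and colevel differ, but `U_{G⋌𝓑}` is a single point.
  · have eq_grp_one : ∀ y : UPt 0 G 𝓑, y = grp 1 := by
      rintro (i | i | θ | ⟨_, i⟩ | i)
      · exact i.elim0
      · exact i.elim0
      · rw [Subsingleton.elim θ 1]
      · exact i.1.elim0
      · exact i.elim0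
    rw [eq_grp_one (Ψ x), eq_grp_one x]
  · have : NeZero n := ⟨hn⟩
    have hcover (j : Fin n) : ∃ B ∈ 𝓑, j ∈ B := (h𝓑 j).exists
    have hcoheight := Order.coheight_orderIso Ψ x
    rwa [coheight_eq_colevel hcover, coheight_eq_colevel hcover, Nat.cast_inj] at hcoheight

theorem exists_map_pt_eq (i : Fin n) : ∃ j, Ψ (pt i) = pt j := by
  have hlevel := colevel_map h𝓑 Ψ (pt i)
  cases h : Ψ (pt i) <;> simp [h, colevel] at hlevel ⊢

theorem exists_map_low_eq (i : Fin n) : ∃ j, Ψ (low i) = low j := by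
  have hlevel := colevel_map h𝓑 Ψ (low i)
  cases h : Ψ (low i) <;> simp [h, colevel] at hlevel ⊢

theorem exists_map_up_eq (i : Fin n) : ∃ j, Ψ (up i) = up j := by
  have hlevel := colevel_map h𝓑 Ψ (up i)
  have hmin : ¬ IsMin (Ψ (up i)) := Ψ.isMin_apply.not.2 (not_isMin_up i)
  cases h : Ψ (up i) with
  | grp θ => exact absurd (h ▸ isMin_grp θ) hmin
  | _ => simp [h, colevel] at hlevel ⊢

theorem exists_map_grp_eq (θ : G) : ∃ θ', Ψ (grp θ) = grp θ' := by
  have hlevel := colevel_map h𝓑 Ψ (grp θ)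
  have hmin : IsMin (Ψ (grp θ)) := Ψ.isMin_apply.2 (isMin_grp θ)
  cases h : Ψ (grp θ) with
  | up i => exact absurd (h ▸ hmin) (not_isMin_up i)
  | _ => simp [h, colevel] at hlevel ⊢

theorem map_fence : (∀ i, Ψ (low i) = low i) ∧ ∀ i, Ψ (up i) = up i := by
  choose a ha using exists_map_low_eq h𝓑 Ψ
  choose b hb using exists_map_up_eq h𝓑 Ψ
  have a_inj : Function.Injective a := fun i j h => low.inj (Ψ.injective (by rw [ha, ha, h]))
  have b_inj : Function.Injective b := fun i j h => up.inj (Ψ.injective (by rw [hb, hb, h]))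
  obtain ⟨rfl, rfl⟩ := eq_id_of_fence_hom a_inj b_inj fun i j hij => by
    rw [← low_le_up_iff (G := G) (𝓑 := 𝓑), ← ha, ← hb, Ψ.le_iff_le]
    exact low_le_up_iff.2 hij
  exact ⟨ha, hb⟩

variable {Ψ}

theorem map_cellOf_of_map_grp {θ θ' : G} (hθ : Ψ (grp θ) = grp θ')
    {B : Set (Fin n)} (hB : B ∈ 𝓑) {j : Fin n} (hj : j ∈ B) :
    Ψ (cellOf θ hB hj) = cellOf θ' hB hj := by
  refine eq_cellOf h𝓑 (colevel_map h𝓑 Ψ _) ?_ ?_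
  · rw [← (map_fence h𝓑 Ψ).2 j, Ψ.le_iff_le]
    exact (up_lt_cellOf θ hB hj).le
  · rw [← hθ, Ψ.le_iff_le]
    exact (grp_lt_cellOf θ hB hj).le

theorem map_pt_of_map_grp {θ θ' : G} (hθ : Ψ (grp θ) = grp θ') (j : Fin n) :
    Ψ (pt ((θ : Equiv.Perm (Fin n)) j)) = pt ((θ' : Equiv.Perm (Fin n)) j) := by
  obtain ⟨B, hB, hj⟩ := (h𝓑 j).exists
  obtain ⟨i, hi⟩ := exists_map_pt_eq h𝓑 Ψ ((θ : Equiv.Perm (Fin n)) j)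
  have hle : cellOf θ' hB hj ≤ pt i := by
    rw [← map_cellOf_of_map_grp h𝓑 hθ hB hj, ← hi, Ψ.le_iff_le]
    exact (cellOf_lt_pt θ hB hj).le
  rw [hi, eq_of_cell_le_pt hle]

theorem eq_one_of_map_grp_one (h1 : Ψ (grp 1) = grp 1) : Ψ = 1 := by
  have map_pt (i : Fin n) : Ψ (pt i) = pt i := map_pt_of_map_grp h𝓑 h1 i
  have map_grp (θ : G) : Ψ (grp θ) = grp θ := by
    obtain ⟨θ', hθ⟩ := exists_map_grp_eq h𝓑 Ψ θ
    have happly (j : Fin n) : (θ : Equiv.Perm (Fin n)) j = (θ' : Equiv.Perm (Fin n)) j :=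
      pt.inj ((map_pt _).symm.trans (map_pt_of_map_grp h𝓑 hθ j))
    rw [hθ, Subtype.ext (Equiv.ext happly)]
  ext x
  cases x with
  | low i => exact (map_fence h𝓑 Ψ).1 i
  | up i => exact (map_fence h𝓑 Ψ).2 i
  | grp θ => exact map_grp θ
  | cell μ j =>
    obtain ⟨θ, h⟩ := exists_eq_cellOf μ j
    rw [h]
    exact map_cellOf_of_map_grp h𝓑 (map_grp θ) _ _
  | pt i => exact map_pt i

theorem toOrderIsoHom_bijective : Function.Bijective (toOrderIsoHom (G := G) (𝓑 := 𝓑)) := by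
  refine ⟨toOrderIsoHom_injective, fun Ψ => ?_⟩
  obtain ⟨σ, hσ⟩ := exists_map_grp_eq h𝓑 Ψ 1
  let Φ : UPt n G 𝓑 ≃o UPt n G 𝓑 := toOrderIsoHom σ⁻¹ * Ψ
  have hΦ : Φ (grp 1) = grp 1 := by
    rw [RelIso.mul_apply, hσ, toOrderIsoHom_grp, inv_mul_cancel]
  refine ⟨σ, inv_mul_eq_one.1 ?_⟩
  rw [← map_inv]
  exact eq_one_of_map_grp_one h𝓑 hΦ

end Rigidity

end UPt

theorem representation_by_blocks_general {n : ℕ} {G : Subgroup (Equiv.Perm (Fin n))}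
    {𝓑 : Set (Set (Fin n))} (h𝓑 : ∀ j, ∃! B ∈ 𝓑, j ∈ B) :
    (∀ Ψ : UPt n G 𝓑 ≃o UPt n G 𝓑,
      (⇑Ψ) '' (Set.range (UPt.pt : Fin n → UPt n G 𝓑)) =
        Set.range (UPt.pt : Fin n → UPt n G 𝓑)) ∧
    ∃ f : (UPt n G 𝓑 ≃o UPt n G 𝓑) → G,
      (∀ (Ψ : UPt n G 𝓑 ≃o UPt n G 𝓑) (j : Fin n),
        Ψ (UPt.pt j) = UPt.pt ((f Ψ : Equiv.Perm (Fin n)) j)) ∧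
      (∀ Ψ Φ : UPt n G 𝓑 ≃o UPt n G 𝓑, f (Ψ.trans Φ) = f Φ * f Ψ) ∧
      Function.Injective f ∧
      Function.Surjective f := by
  let e : (UPt n G 𝓑 ≃o UPt n G 𝓑) ≃* G :=
    (MulEquiv.ofBijective UPt.toOrderIsoHom (UPt.toOrderIsoHom_bijective h𝓑)).symm
  have map_pt (Ψ : UPt n G 𝓑 ≃o UPt n G 𝓑) (j : Fin n) :
      Ψ (UPt.pt j) = UPt.pt ((e Ψ : Equiv.Perm (Fin n)) j) := by
    conv_lhs => rw [← e.symm_apply_apply Ψ]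
    exact UPt.toOrderIsoHom_pt _ j
  refine ⟨fun Ψ => ?_, e, map_pt, fun Ψ Φ => map_mul e Φ Ψ, e.injective, e.surjective⟩
  have comp_pt : ⇑Ψ ∘ UPt.pt = UPt.pt ∘ (e Ψ : Equiv.Perm (Fin n)) := funext (map_pt Ψ)
  rw [← Set.range_comp, comp_pt, (e Ψ : Equiv.Perm (Fin n)).surjective.range_comp]

/-- For every subgroup `G` of `S_n` and every block partition `𝓑` for `G`,
the automorphism group of the ordered set `U_{G⋌𝓑}` is isomorphic to `G` via `Ψ ↦ Ψ|_T`: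
every automorphism maps `T` onto itself, the restriction map is an injective group
homomorphism into `G`, and every `σ ∈ G` arises as such a restriction. -/
theorem representation_by_blocks (n : ℕ) (hn : 1 ≤ n) (G : Subgroup (Equiv.Perm (Fin n)))
    (P : BlockPartition n G) :
    (∀ Ψ : UPt n G P.blocks ≃o UPt n G P.blocks,
      (⇑Ψ) '' (Set.range (UPt.pt : Fin n → UPt n G P.blocks)) =
        Set.range (UPt.pt : Fin n → UPt n G P.blocks)) ∧
    ∃ f : (UPt n G P.blocks ≃o UPt n G P.blocks) → G,
      (∀ (Ψ : UPt n G P.blocks ≃o UPt n G P.blocks) (j : Fin n),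
        Ψ (UPt.pt j) = UPt.pt ((f Ψ : Equiv.Perm (Fin n)) j)) ∧
      (∀ Ψ Φ : UPt n G P.blocks ≃o UPt n G P.blocks, f (Ψ.trans Φ) = f Φ * f Ψ) ∧
      Function.Injective f ∧
      Function.Surjective f :=
  representation_by_blocks_general P.partitions
end

section
/- For every subgroup G of S_n and every block partition 𝓑 for G with orbit cut {B_1,…,B_ℓ}, the cardinality of the ordered set U_{G⋌𝓑} equals |G| + 3n + Σ_{i=1}^{ℓ} |B_i| · m_i² · |G↺B_i|, where m_i := |G·B_i| and G↺B_i := {σ|_{B_i} : σ ∈ G, σ[B_i] = B_i}. -/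
section Restrictions

open MulAction
open scoped Pointwise

variable (M : Type*) {α : Type*} [Group M] [MulAction M α]

/-- The set `M|_B` of restrictions to `B` of the maps `x ↦ m • x`, encoded as the orbit of the
inclusion `B → α` under postcomposition. Taking the setwise stabilizer of `B` for `M` yields the
set `M↺B`. -/
abbrev restrictions (B : Set α) : Set (B → α) :=
  orbit M (Subtype.val : B → α)

theorem stabilizer_subtypeVal (B : Set α) :
    stabilizer M (Subtype.val : B → α) = fixingSubgroup M B := by
  ext m
  simp only [mem_stabilizer_iff, mem_fixingSubgroup_iff, funext_iff, Pi.smul_apply, Subtype.forall]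

theorem card_restrictions (B : Set α) :
    Nat.card (restrictions M B) = (fixingSubgroup M B).index := by
  rw [← stabilizer_subtypeVal, index_stabilizer, Nat.card_coe_set_eq]

theorem card_restrictions_eq_card_orbit_mul (B : Set α) :
    Nat.card (restrictions M B) =
      Nat.card (orbit M B) * Nat.card (restrictions (stabilizer M B) B) := by
  have fixing_le : fixingSubgroup M B ≤ stabilizer M B := fixingSubgroup_le_stabilizer M B
  have relIndex_eq : (fixingSubgroup M B).relIndex (stabilizer M B) =
      Nat.card (restrictions (stabilizer M B) B) := by
    rw [card_restrictions]
    rfl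
  rw [card_restrictions, ← Subgroup.relIndex_mul_index fixing_le, relIndex_eq, index_stabilizer,
    Nat.card_coe_set_eq (orbit M B), mul_comm]

variable {M}

theorem card_restrictions_smul (m : M) (B : Set α) :
    Nat.card (restrictions M (m • B)) = Nat.card (restrictions M B) := by
  rw [card_restrictions, card_restrictions,
    SubMulAction.fixingSubgroup_smul_eq_fixingSubgroup_map_conj]
  exact Subgroup.index_map_equiv _ (MulAut.conj m)

theorem card_sigma_orbit_restrictions [Finite α] (B : Set α) :
    Nat.card ((C : orbit M B) × (restrictions M C.1 × C.1)) =
      Nat.card B * Nat.card (orbit M B) ^ 2 * Nat.card (restrictions (stabilizer M B) B) := by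
  have := Fintype.ofFinite (orbit M B)
  have card_fiber : ∀ C : orbit M B,
      Nat.card (restrictions M C.1 × C.1) = Nat.card (restrictions M B) * Nat.card B := by
    rintro ⟨_, m, rfl⟩
    simp only [Nat.card_prod, card_restrictions_smul, Set.natCard_smul_set]
  rw [Nat.card_sigma, Finset.sum_congr rfl fun C _ => card_fiber C, Finset.sum_const,
    Finset.card_univ, smul_eq_mul, ← Nat.card_eq_fintype_card, card_restrictions_eq_card_orbit_mul]
  ring

theorem pairwise_disjoint_orbit_of_injective {ι : Type*} {a : ι → α}
    (ha : Function.Injective fun i => orbit M (a i)) :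
    Pairwise (Function.onFun Disjoint fun i => orbit M (a i)) := fun i j hij =>
  (orbit.eq_or_disjoint (a i) (a j)).resolve_left (ha.ne hij)

theorem card_sigma_iUnion_orbit_restrictions [Finite α] {ι : Type*} [Fintype ι] {B : ι → Set α}
    (hB : Function.Injective fun i => orbit M (B i)) :
    Nat.card ((C : ⋃ i, orbit M (B i)) × (restrictions M C.1 × C.1)) =
      ∑ i, Nat.card (B i) * Nat.card (orbit M (B i)) ^ 2 *
        Nat.card (restrictions (stabilizer M (B i)) (B i)) := by
  have := Fintype.ofFinite (⋃ i, orbit M (B i))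
  have := fun i => Fintype.ofFinite (orbit M (B i))
  let e := (Set.unionEqSigmaOfDisjoint (pairwise_disjoint_orbit_of_injective hB)).symm
  rw [Nat.card_sigma, ← e.sum_comp, Fintype.sum_sigma]
  refine Finset.sum_congr rfl fun i _ => ?_
  rw [← card_sigma_orbit_restrictions, Nat.card_sigma]
  rfl

end Restrictions

section PermutationGroup

open MulAction
open scoped Pointwise

variable {α : Type*} {G : Subgroup (Equiv.Perm α)}

theorem setOf_image_eq_orbit (B : Set α) : {C | ∃ σ ∈ G, σ '' B = C} = orbit G B := by
  ext C
  constructor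
  · rintro ⟨σ, hσ, rfl⟩
    exact ⟨⟨σ, hσ⟩, rfl⟩
  · rintro ⟨σ, rfl⟩
    exact ⟨σ, σ.2, rfl⟩

theorem mem_restrictions_iff {B : Set α} {f : B → α} :
    f ∈ restrictions G B ↔ ∃ σ ∈ G, f = fun x => σ x.1 := by
  constructor
  · rintro ⟨σ, rfl⟩
    exact ⟨σ, σ.2, rfl⟩
  · rintro ⟨σ, hσ, rfl⟩
    exact ⟨⟨σ, hσ⟩, rfl⟩

theorem setOf_restriction_eq_restrictions_stabilizer (B : Set α) :
    {f : B → α | ∃ σ ∈ G, σ '' B = B ∧ f = fun x => σ x.1} = restrictions (stabilizer G B) B := by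
  ext f
  constructor
  · rintro ⟨σ, hσ, hσB, rfl⟩
    exact ⟨⟨⟨σ, hσ⟩, hσB⟩, rfl⟩
  · rintro ⟨⟨σ, hσB⟩, rfl⟩
    exact ⟨σ, σ.2, hσB, rfl⟩

end PermutationGroup

section Representation

open MulAction
open scoped Pointwise

variable {n : ℕ} {G : Subgroup (Equiv.Perm (Fin n))}

/-- The points `(j, μ)` of the sets `D^μ`, grouped by the domain of `μ`. -/
def Restr.sigmaDomEquiv (𝓑 : Set (Set (Fin n))) :
    ((μ : Restr n G 𝓑) × μ.1.1) ≃ ((C : 𝓑) × (restrictions G C.1 × C.1)) where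
  toFun c := ⟨⟨c.1.1.1, c.1.2.1⟩, ⟨c.1.1.2, mem_restrictions_iff.mpr c.1.2.2⟩, c.2⟩
  invFun c := ⟨⟨⟨c.1.1, c.2.1.1⟩, c.1.2, mem_restrictions_iff.mp c.2.1.2⟩, c.2.2⟩
  left_inv _ := rfl
  right_inv _ := rfl

/-- The underlying set of `U_{G⋌𝓑}` as the disjoint union of `F`, `T`, `G` and the sets `D^μ`. -/
def UPt.equivSum (𝓑 : Set (Set (Fin n))) :
    UPt n G 𝓑 ≃ (Fin n ⊕ Fin n ⊕ Fin n) ⊕ G ⊕ ((μ : Restr n G 𝓑) × μ.1.1) where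
  toFun
    | .low i => .inl (.inl i)
    | .up i => .inl (.inr (.inl i))
    | .pt i => .inl (.inr (.inr i))
    | .grp σ => .inr (.inl σ)
    | .cell μ j => .inr (.inr ⟨μ, j⟩)
  invFun
    | .inl (.inl i) => .low i
    | .inl (.inr (.inl i)) => .up i
    | .inl (.inr (.inr i)) => .pt i
    | .inr (.inl σ) => .grp σ
    | .inr (.inr ⟨μ, j⟩) => .cell μ j
  left_inv x := by cases x <;> rfl
  right_inv x := by rcases x with (_ | _ | _) | _ | ⟨_, _⟩ <;> rfl

theorem UPt.card_eq (𝓑 : Set (Set (Fin n))) :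
    Nat.card (UPt n G 𝓑) =
      Nat.card G + 3 * n + Nat.card ((C : 𝓑) × (restrictions G C.1 × C.1)) := by
  have : Finite ((μ : Restr n G 𝓑) × μ.1.1) := inferInstance
  rw [Nat.card_congr (UPt.equivSum 𝓑), Nat.card_sum, Nat.card_sum, Nat.card_sum, Nat.card_sum,
    Nat.card_fin, Nat.card_congr (Restr.sigmaDomEquiv 𝓑)]
  ring

theorem BlockPartition.blocks_eq_iUnion_orbit (P : BlockPartition n G) :
    P.blocks = ⋃ i, orbit G (P.cut i) := by
  simp only [BlockPartition.blocks, ← setOf_image_eq_orbit, Set.ofPred_exists]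

theorem BlockPartition.injective_orbit_cut (P : BlockPartition n G) :
    Function.Injective fun i => orbit G (P.cut i) := by
  intro i j hij
  obtain ⟨σ, hσ⟩ : P.cut j ∈ orbit G (P.cut i) := orbit_eq_iff.mp hij.symm
  exact P.cut_distinct_orbits i j σ σ.2 hσ

theorem size_of_representation_general {ι : Type*} [Fintype ι] {B : ι → Set (Fin n)}
    (hB : Function.Injective fun i => orbit G (B i)) :
    Nat.card (UPt n G (⋃ i, orbit G (B i))) =
      Nat.card G + 3 * n +
        ∑ i, Nat.card (B i) * Nat.card (orbit G (B i)) ^ 2 *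
          Nat.card (restrictions (stabilizer G (B i)) (B i)) := by
  rw [UPt.card_eq, card_sigma_iUnion_orbit_restrictions hB]

end Representation

/-- For every subgroup `G` of `S_n` and every block partition `𝓑` for `G`
with orbit cut `{B_1,…,B_ℓ}`, the cardinality of `U_{G⋌𝓑}` equals
`|G| + 3n + Σ_{i=1}^{ℓ} |B_i| · m_i² · |G↺B_i|`, where `m_i = |G·B_i|` and
`G↺B_i = {σ|_{B_i} : σ ∈ G, σ[B_i] = B_i}`. -/
theorem size_of_representation (n : ℕ) (hn : 1 ≤ n) (G : Subgroup (Equiv.Perm (Fin n)))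
    (P : BlockPartition n G) :
    Nat.card (UPt n G P.blocks) =
      Nat.card G + 3 * n +
        ∑ i : Fin P.ℓ,
          Nat.card (P.cut i) *
            (Nat.card {C : Set (Fin n) | ∃ σ ∈ G, (σ : Equiv.Perm (Fin n)) '' P.cut i = C}) ^ 2 *
            Nat.card {f : (P.cut i) → Fin n | ∃ σ ∈ G,
              (σ : Equiv.Perm (Fin n)) '' P.cut i = P.cut i ∧
              f = fun x => (σ : Equiv.Perm (Fin n)) x.1} := by
  simp only [setOf_image_eq_orbit, setOf_restriction_eq_restrictions_stabilizer,
    P.blocks_eq_iUnion_orbit, size_of_representation_general P.injective_orbit_cut]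
end

section
/- Let G be a subgroup of S_n with block partition 𝓑 and let σ ∈ G. The map Φ_σ on U_{G⋌𝓑} defined by Φ_σ|_F = id_F, Φ_σ(j) = σ(j) for j ∈ T, Φ_σ(j,μ) = (j, σ∘μ) for every μ ∈ ⋃_{B∈𝓑} G|_B and j ∈ dom(μ), and Φ_σ(θ) = σθ for θ ∈ G, is an order-automorphism of U_{G⋌𝓑} whose restriction to T is σ. -/
/-- The order automorphism `a ↦ g • a` given by an element of a group that acts by monotone maps. -/
def smulOrderIso {M α : Type*} [Group M] [MulAction M α] [Preorder α]
    [CovariantClass M α HSMul.hSMul LE.le] (g : M) : α ≃o α :=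
  (MulAction.toPerm g).toOrderIso (smul_mono_right g) (smul_mono_right g⁻¹)

section Action

variable {n : ℕ} {G : Subgroup (Equiv.Perm (Fin n))} {𝓑 : Set (Set (Fin n))}

/-- The map `Φ_σ` on `U_{G⋌𝓑}`, written `σ • x`, for an arbitrary family `𝓑` of subsets of `T`. -/
instance UPt.instSMul : SMul G (UPt n G 𝓑) where
  smul σ
    | .low i => .low i
    | .up i => .up i
    | .grp θ => .grp (σ * θ)
    | .cell μ j => .cell (Restr.comp σ μ) j
    | .pt j => .pt ((σ : Equiv.Perm (Fin n)) j)

theorem UPt.smul_low (σ : G) (i : Fin n) : σ • (.low i : UPt n G 𝓑) = .low i := rfl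

theorem UPt.smul_up (σ : G) (i : Fin n) : σ • (.up i : UPt n G 𝓑) = .up i := rfl

theorem UPt.smul_grp (σ θ : G) : σ • (.grp θ : UPt n G 𝓑) = .grp (σ * θ) := rfl

theorem UPt.smul_cell (σ : G) (μ : Restr n G 𝓑) (j : μ.1.1) :
    σ • UPt.cell μ j = .cell (Restr.comp σ μ) j := rfl

theorem UPt.smul_pt (σ : G) (j : Fin n) :
    σ • (.pt j : UPt n G 𝓑) = .pt ((σ : Equiv.Perm (Fin n)) j) := rfl

instance UPt.instMulAction : MulAction G (UPt n G 𝓑) where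
  one_smul
    | .low _ | .up _ | .cell _ _ | .pt _ => rfl
    | .grp θ => by rw [UPt.smul_grp, one_mul]
  mul_smul σ τ
    -- `Restr.comp` keeps the domain of `μ`, so `j` needs no transport in the `cell` case.
    | .low _ | .up _ | .cell _ _ | .pt _ => rfl
    | .grp θ => by rw [UPt.smul_grp, UPt.smul_grp, UPt.smul_grp, mul_assoc]

theorem UStep.smul (σ : G) {x y : UPt n G 𝓑} (h : UStep n G 𝓑 x y) :
    UStep n G 𝓑 (σ • x) (σ • y) := by
  cases h with
  | fence_eq i => exact .fence_eq i
  | fence_succ i j hij => exact .fence_succ i j hij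
  | up_cell μ j => exact .up_cell (Restr.comp σ μ) j
  | cell_pt μ j => exact .cell_pt (Restr.comp σ μ) j
  | grp_cell θ μ j hμ =>
    exact .grp_cell (σ * θ) (Restr.comp σ μ) j
      fun x => congrArg (σ : Equiv.Perm (Fin n)) (hμ x)

instance UPt.instCovariantClassSMulLE : CovariantClass G (UPt n G 𝓑) HSMul.hSMul LE.le where
  elim σ _ _ h := Relation.ReflTransGen.lift (σ • ·) (fun _ _ => UStep.smul σ) _ _ h

end Action

theorem explicit_automorphism_general (n : ℕ) (G : Subgroup (Equiv.Perm (Fin n)))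
    (𝓑 : Set (Set (Fin n))) (σ : G) :
    ∃ Ψ : UPt n G 𝓑 ≃o UPt n G 𝓑,
      (∀ i : Fin n, Ψ (UPt.low i) = UPt.low i) ∧
      (∀ i : Fin n, Ψ (UPt.up i) = UPt.up i) ∧
      (∀ j : Fin n, Ψ (UPt.pt j) = UPt.pt ((σ : Equiv.Perm (Fin n)) j)) ∧
      (∀ (μ : Restr n G 𝓑) (j : μ.1.1),
        Ψ (UPt.cell μ j) = UPt.cell (Restr.comp σ μ) j) ∧
      (∀ θ : G, Ψ (UPt.grp θ) = UPt.grp (σ * θ)) :=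
  ⟨smulOrderIso σ, UPt.smul_low σ, UPt.smul_up σ, UPt.smul_pt σ, UPt.smul_cell σ, UPt.smul_grp σ⟩

/-- For every `σ ∈ G`, the map `Φ_σ` fixing `F` pointwise, sending
`j ↦ σ(j)` on `T`, `(j,μ) ↦ (j, σ∘μ)` on each `D^μ`, and `θ ↦ σθ` on `G`, is an
order-automorphism of `U_{G⋌𝓑}` whose restriction to `T` is `σ`. -/
theorem explicit_automorphism (n : ℕ) (hn : 1 ≤ n) (G : Subgroup (Equiv.Perm (Fin n)))
    (P : BlockPartition n G) (σ : G) :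
    ∃ Ψ : UPt n G P.blocks ≃o UPt n G P.blocks,
      (∀ i : Fin n, Ψ (UPt.low i) = UPt.low i) ∧
      (∀ i : Fin n, Ψ (UPt.up i) = UPt.up i) ∧
      (∀ j : Fin n, Ψ (UPt.pt j) = UPt.pt ((σ : Equiv.Perm (Fin n)) j)) ∧
      (∀ (μ : Restr n G P.blocks) (j : μ.1.1),
        Ψ (UPt.cell μ j) = UPt.cell (Restr.comp σ μ) j) ∧
      (∀ θ : G, Ψ (UPt.grp θ) = UPt.grp (σ * θ)) :=
  explicit_automorphism_general n G P.blocks σ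
end

section
/- Let G be a subgroup of S_n with block partition 𝓑. Every order-automorphism of U_{G⋌𝓑} restricts to the identity on the fence F = {ℓ_1,u_1,…,ℓ_n,u_n}. -/
/-!
The points `u_k` are the elements of height one in `U_{G⋌𝓑}`, and the points `ℓ_i` are the
elements below them, so an isomorphism permutes the `u_k` by some `τ` and the `ℓ_i` by some `σ`.
Since `ℓ_i < u_k` forces `k ≤ i`, the image of `ℓ_k < u_k` gives `τ k ≤ σ k` for all `k`. Two
permutations of a finite ordered set that are comparable pointwise are equal, so `σ = τ`. Now the
image of `ℓ_{k+1} < u_k` gives `σ k ≤ σ (k + 1)`, so `σ` is an increasing permutation of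
`{1,…,n}`, that is, the identity.
-/

theorem exists_perm_of_range_subset_range {α β : Type*} [Finite α] {f g : α → β}
    (hf : Function.Injective f) (hfg : Set.range f ⊆ Set.range g) :
    ∃ σ : Equiv.Perm α, ∀ a, f a = g (σ a) := by
  obtain ⟨s, rfl⟩ := Set.range_subset_range_iff_exists_comp.1 hfg
  exact ⟨.ofBijective s (Finite.injective_iff_bijective.1 hf.of_comp), fun _ => rfl⟩

theorem perm_eq_one_of_forall_le {α : Type*} [Finite α] [PartialOrder α] {σ : Equiv.Perm α}
    (h : ∀ a, a ≤ σ a) : σ = 1 := by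
  obtain ⟨m, hm, hσm⟩ := isOfFinOrder_iff_pow_eq_one.1 (isOfFinOrder_of_finite σ)
  obtain ⟨k, rfl⟩ := Nat.exists_eq_add_one.2 hm
  ext a
  refine le_antisymm ?_ (h a)
  calc
    σ a ≤ σ^[k] (σ a) := Function.id_le_iterate_of_id_le h k (σ a)
    _ = (σ ^ (k + 1)) a := by simp [pow_succ, Equiv.Perm.iterate_eq_pow]
    _ = a := by rw [hσm, Equiv.Perm.one_apply]

theorem perm_eq_of_forall_le {α : Type*} [Finite α] [PartialOrder α] {σ τ : Equiv.Perm α}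
    (h : ∀ a, σ a ≤ τ a) : σ = τ := by
  have hτσ : τ * σ⁻¹ = 1 := perm_eq_one_of_forall_le fun a => by simpa using h (σ⁻¹ a)
  exact (mul_inv_eq_one.1 hτσ).symm

theorem perm_eq_one_of_monotone {α : Type*} [Finite α] [LinearOrder α] {σ : Equiv.Perm α}
    (hσ : Monotone σ) : σ = 1 := by
  have hσ' : StrictMono σ := hσ.strictMono_of_injective σ.injective
  exact Equiv.ext fun a => le_antisymm (hσ'.le_id a) (hσ'.id_le a)

theorem perm_eq_one_of_forall_wcovBy_le {α : Type*} [Finite α] [LinearOrder α]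
    {σ τ : Equiv.Perm α} (h : ∀ a b, a ⩿ b → τ a ≤ σ b) : σ = 1 ∧ τ = 1 := by
  have := Fintype.ofFinite α
  let := Fintype.toLocallyFiniteOrder (α := α)
  obtain rfl : τ = σ := perm_eq_of_forall_le fun a => h a a (WCovBy.refl a)
  have hτ : τ = 1 := perm_eq_one_of_monotone ((monotone_iff_forall_wcovBy _).2 h)
  exact ⟨hτ, hτ⟩

namespace UPt

variable {n : ℕ} {G : Subgroup (Equiv.Perm (Fin n))} {𝓑 : Set (Set (Fin n))}

theorem lt_of_uStep {x y : UPt n G 𝓑} (h : UStep n G 𝓑 x y) : x < y :=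
  lt_of_le_of_ne (Relation.ReflTransGen.single h) (ne_of_apply_ne rank h.rank_lt.ne)

theorem exists_le_uStep_of_lt {x y : UPt n G 𝓑} (h : x < y) : ∃ z, x ≤ z ∧ UStep n G 𝓑 z y :=
  (Relation.ReflTransGen.cases_tail h.le).resolve_left h.ne'

theorem isMin_low (i : Fin n) : IsMin (low i : UPt n G 𝓑) :=
  isMin_iff_forall_not_lt.2 fun _ h => by
    obtain ⟨_, -, ⟨⟩⟩ := exists_le_uStep_of_lt h

theorem low_lt_up_of_wcovBy {i k : Fin n} (h : k ⩿ i) : (low i : UPt n G 𝓑) < up k := by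
  rcases h.eq_or_covBy with rfl | h
  · exact lt_of_uStep (.fence_eq k)
  · exact lt_of_uStep (.fence_succ k i (by simpa [eq_comm] using h))

theorem lt_up_iff {x : UPt n G 𝓑} {k : Fin n} : x < up k ↔ ∃ i, k ⩿ i ∧ x = low i := by
  constructor
  · intro h
    obtain ⟨z, hxz, hz⟩ := exists_le_uStep_of_lt h
    cases hz with
    | fence_eq => exact ⟨k, WCovBy.refl k, (isMin_low k).eq_of_le hxz⟩
    | fence_succ _ i hi =>
      exact ⟨i, CovBy.wcovBy (by simp [hi]), (isMin_low i).eq_of_le hxz⟩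
  · rintro ⟨i, hi, rfl⟩
    exact low_lt_up_of_wcovBy hi

theorem low_lt_up_iff {i k : Fin n} : (low i : UPt n G 𝓑) < up k ↔ k ⩿ i := by
  simp [lt_up_iff]

theorem low_lt_up_self (k : Fin n) : (low k : UPt n G 𝓑) < up k :=
  low_lt_up_iff.2 (WCovBy.refl k)

theorem one_lt_height_cell (μ : Restr n G 𝓑) (j : μ.1.1) : 1 < Order.height (cell μ j) :=
  Order.one_lt_height_iff.2 ⟨up j.1, low j.1, low_lt_up_self j.1, lt_of_uStep (.up_cell μ j)⟩

theorem height_up (k : Fin n) : Order.height (up k : UPt n G 𝓑) = 1 := by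
  refine le_antisymm (not_lt.1 fun h => ?_) (Order.one_le_iff_ne_zero.2 ?_)
  · obtain ⟨y, z, hzy, hyk⟩ := Order.one_lt_height_iff.1 h
    obtain ⟨i, -, rfl⟩ := lt_up_iff.1 hyk
    exact (isMin_low i).not_lt hzy
  · exact Order.height_ne_zero.2 (low_lt_up_self k).not_isMin

theorem height_pt_ne_one (t : Fin n) : Order.height (pt t : UPt n G 𝓑) ≠ 1 := by
  intro h
  have hmin : ¬ IsMin (pt t : UPt n G 𝓑) := Order.height_ne_zero.1 (by simp [h])
  obtain ⟨y, hy⟩ := not_isMin_iff.1 hmin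
  obtain ⟨z, -, hz⟩ := exists_le_uStep_of_lt hy
  cases hz with
  | cell_pt μ j =>
    have hle := Order.height_mono (lt_of_uStep (.cell_pt μ j)).le
    exact ((one_lt_height_cell μ j).trans_le hle).ne' h

theorem height_eq_one_iff {x : UPt n G 𝓑} : Order.height x = 1 ↔ x ∈ Set.range up := by
  constructor
  · intro h
    cases x with
    | low i => simp [Order.height_eq_zero.2 (isMin_low i)] at h
    | up k => exact Set.mem_range_self k
    | grp θ => simp [Order.height_eq_zero.2 (isMin_grp θ)] at h
    | cell μ j => exact absurd h (one_lt_height_cell μ j).ne'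
    | pt t => exact absurd h (height_pt_ne_one t)
  · rintro ⟨k, rfl⟩
    exact height_up k

section OrderIso

variable {G' : Subgroup (Equiv.Perm (Fin n))} {𝓑' : Set (Set (Fin n))}
  (Φ : UPt n G 𝓑 ≃o UPt n G' 𝓑')

theorem exists_perm_map_up : ∃ τ : Equiv.Perm (Fin n), ∀ k, Φ (up k) = up (τ k) := by
  refine exists_perm_of_range_subset_range (f := Φ ∘ up)
    (Φ.injective.comp fun _ _ => up.inj) ?_
  rintro _ ⟨k, rfl⟩
  exact height_eq_one_iff.1 ((Order.height_orderIso Φ (up k)).trans (height_up k))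

theorem exists_perm_map_low : ∃ σ : Equiv.Perm (Fin n), ∀ i, Φ (low i) = low (σ i) := by
  obtain ⟨τ, hτ⟩ := exists_perm_map_up Φ
  refine exists_perm_of_range_subset_range (f := Φ ∘ low)
    (Φ.injective.comp fun _ _ => low.inj) ?_
  rintro _ ⟨i, rfl⟩
  have hlt : Φ (low i) < up (τ i) := hτ i ▸ Φ.lt_iff_lt.2 (low_lt_up_self i)
  obtain ⟨j, -, hj⟩ := lt_up_iff.1 hlt
  exact ⟨j, hj.symm⟩

end OrderIso

end UPt

theorem automorphism_fixes_fence_general {n : ℕ} {G G' : Subgroup (Equiv.Perm (Fin n))}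
    {𝓑 𝓑' : Set (Set (Fin n))} (Φ : UPt n G 𝓑 ≃o UPt n G' 𝓑') :
    (∀ i : Fin n, Φ (UPt.low i) = UPt.low i) ∧
    (∀ i : Fin n, Φ (UPt.up i) = UPt.up i) := by
  obtain ⟨σ, hσ⟩ := UPt.exists_perm_map_low Φ
  obtain ⟨τ, hτ⟩ := UPt.exists_perm_map_up Φ
  have hadj : ∀ k i, k ⩿ i → τ k ⩿ σ i := fun k i hki => by
    rw [← UPt.low_lt_up_iff (G := G') (𝓑 := 𝓑'), ← hσ, ← hτ, Φ.lt_iff_lt]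
    exact UPt.low_lt_up_iff.2 hki
  obtain ⟨rfl, rfl⟩ := perm_eq_one_of_forall_wcovBy_le fun k i hki => (hadj k i hki).le
  exact ⟨hσ, hτ⟩

/-- Every order-automorphism of `U_{G⋌𝓑}` restricts to the identity on the
fence `F = {ℓ_1,u_1,…,ℓ_n,u_n}`. -/
theorem automorphism_fixes_fence (n : ℕ) (hn : 1 ≤ n) (G : Subgroup (Equiv.Perm (Fin n)))
    (P : BlockPartition n G) (Ψ : UPt n G P.blocks ≃o UPt n G P.blocks) :
    (∀ i : Fin n, Ψ (UPt.low i) = UPt.low i) ∧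
    (∀ i : Fin n, Ψ (UPt.up i) = UPt.up i) :=
  automorphism_fixes_fence_general Ψ
end

section
/- For every subgroup G of the symmetric group S_n on T = {1,…,n} there exists a finite partially ordered set U containing T as a subset such that every order-automorphism of U maps T onto itself, the restriction map Ψ ↦ Ψ|_T is a group isomorphism from the automorphism group Aut(U) onto G, and hence the action of Aut(U) on T is exactly the permutation group G. -/
/-!
Well-order `T` and adjoin to the antichain `T` one copy `{(g, i) | i ∈ T}` of the chain `T` for
each `g ∈ G`, where the chain of `g` records the enumeration `i ↦ g • i` of `T`: a point `j` lies
below `(g, i)` exactly when `j ∈ {g • k | k ≤ i}`. The group acts by `j ↦ h • j` and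
`(g, i) ↦ (h * g, i)`.

Conversely let `Ψ` be an order automorphism. It preserves `T`, the set of minimal elements, and
sends chains to chains. Since a strictly monotone self-map of a well-order is expansive, neither `Ψ`
nor `Ψ⁻¹` lowers the level `i`, so `Ψ (g, i) = (φ g, i)`. Comparing the points below these elements
gives `Ψ (g • j) = φ g • j`. Hence `Ψ` acts on `T` as `φ 1`, and `φ g = φ 1 * g` by faithfulness.
-/

open Set

universe u v

/-- The poset representing the action of `G` on `T`: the points of `T` form an antichain, and each
`g : G` contributes a chain of elements `stage g i` indexed by `i : T`. The points below `stage g i`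
are those of the initial segment `{g • k | k ≤ i}` of the enumeration of `T` by `g`. -/
inductive EnumerationPoset (G : Type u) (T : Type v) : Type (max u v)
  | point (j : T)
  | stage (g : G) (i : T)

namespace EnumerationPoset

variable {G : Type u} {T : Type v}

theorem point_injective : Function.Injective (point : T → EnumerationPoset G T) :=
  fun _ _ h => point.inj h

instance [Finite G] [Finite T] : Finite (EnumerationPoset G T) :=
  Finite.of_surjective (Sum.elim point fun x : G × T => stage x.1 x.2) <| by
    rintro (j | ⟨g, i⟩)
    · exact ⟨.inl j, rfl⟩
    · exact ⟨.inr (g, i), rfl⟩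

variable [Group G] [MulAction G T]

section PartialOrder

variable [PartialOrder T]

instance : LE (EnumerationPoset G T) where
  le
    | point j, point k => j = k
    | point j, stage g i => g⁻¹ • j ≤ i
    | stage _ _, point _ => False
    | stage g i, stage h k => g = h ∧ i ≤ k

@[simp]
theorem point_le_point {j k : T} : (point j : EnumerationPoset G T) ≤ point k ↔ j = k := Iff.rfl

@[simp]
theorem point_le_stage {j i : T} {g : G} : point j ≤ stage g i ↔ g⁻¹ • j ≤ i := Iff.rfl

@[simp]
theorem not_stage_le_point {i j : T} {g : G} : ¬stage g i ≤ point j := id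

@[simp]
theorem stage_le_stage {g h : G} {i k : T} : stage g i ≤ stage h k ↔ g = h ∧ i ≤ k := Iff.rfl

instance : PartialOrder (EnumerationPoset G T) where
  le_refl := by rintro (j | ⟨g, i⟩) <;> simp
  le_trans := by
    rintro (j | ⟨g, i⟩) (j' | ⟨g', i'⟩) (j'' | ⟨g'', i''⟩) <;>
      grind [point_le_point, point_le_stage, not_stage_le_point, stage_le_stage]
  le_antisymm := by
    rintro (j | ⟨g, i⟩) (j' | ⟨g', i'⟩) <;>
      grind [point_le_point, not_stage_le_point, stage_le_stage]

theorem stage_lt_stage {g h : G} {i k : T} : stage g i < stage h k ↔ g = h ∧ i < k := by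
  simp only [lt_iff_le_not_ge, stage_le_stage]
  tauto

theorem isMin_iff_mem_range_point {x : EnumerationPoset G T} : IsMin x ↔ x ∈ range point := by
  constructor
  · rcases x with j | ⟨g, i⟩
    · exact fun _ => mem_range_self j
    · intro hmin
      have hle : point (g • i) ≤ stage g i := by simp
      exact (not_stage_le_point (hmin hle)).elim
  · rintro ⟨j, rfl⟩ (k | ⟨g, i⟩) hle
    · exact (congrArg point (point_le_point.1 hle)).ge
    · exact (not_stage_le_point hle).elim

theorem orderIso_apply_mem_range_point (Ψ : EnumerationPoset G T ≃o EnumerationPoset G T)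
    {x : EnumerationPoset G T} : Ψ x ∈ range point ↔ x ∈ range point := by
  rw [← isMin_iff_mem_range_point, ← isMin_iff_mem_range_point, Ψ.isMin_apply]

theorem orderIso_image_range_point (Ψ : EnumerationPoset G T ≃o EnumerationPoset G T) :
    Ψ '' range point = range point := by
  have hpreimage : Ψ ⁻¹' range point = range point :=
    ext fun _ => orderIso_apply_mem_range_point Ψ
  rw [← hpreimage, Ψ.surjective.image_preimage, hpreimage]

theorem exists_orderIso_apply_stage (Ψ : EnumerationPoset G T ≃o EnumerationPoset G T)
    (g : G) (i : T) : ∃ h k, Ψ (stage g i) = stage h k := by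
  rcases hx : Ψ (stage g i) with j | ⟨h, k⟩
  · have hmem : stage g i ∈ range point :=
      (orderIso_apply_mem_range_point Ψ).1 (hx ▸ mem_range_self j)
    simp at hmem
  · exact ⟨h, k, rfl⟩

theorem orderIso_apply_point_smul {Ψ : EnumerationPoset G T ≃o EnumerationPoset G T} {g h : G}
    (hΨ : ∀ i, Ψ (stage g i) = stage h i) (j : T) : Ψ (point (g • j)) = point (h • j) := by
  obtain ⟨k, hk⟩ := (orderIso_apply_mem_range_point Ψ).2 (mem_range_self (g • j))
  have hle (i : T) : h⁻¹ • k ≤ i ↔ j ≤ i := by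
    rw [← point_le_stage, hk, ← hΨ, Ψ.le_iff_le, point_le_stage, inv_smul_smul]
  rw [← hk, ← inv_smul_eq_iff.1 (eq_of_forall_ge_iff hle)]

/-- The action of `G` on `EnumerationPoset G T` by order automorphisms, given by the action on
points and by left multiplication on the labels of the chains. -/
def translation : G →* (EnumerationPoset G T ≃o EnumerationPoset G T) where
  toFun h :=
    { toFun
        | point j => point (h • j)
        | stage g i => stage (h * g) i
      invFun
        | point j => point (h⁻¹ • j)
        | stage g i => stage (h⁻¹ * g) i
      left_inv := by rintro (j | ⟨g, i⟩) <;> simp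
      right_inv := by rintro (j | ⟨g, i⟩) <;> simp
      map_rel_iff' := by rintro (j | ⟨g, i⟩) (j' | ⟨g', i'⟩) <;> simp [mul_smul] }
  map_one' := by ext (j | ⟨g, i⟩) <;> simp
  map_mul' h h' := by ext (j | ⟨g, i⟩) <;> simp [mul_smul, mul_assoc]

@[simp]
theorem translation_point (h : G) (j : T) : translation h (point j) = point (h • j) := rfl

@[simp]
theorem translation_stage (h g : G) (i : T) : translation h (stage g i) = stage (h * g) i := rfl

theorem translation_injective [FaithfulSMul G T] :
    Function.Injective (translation : G →* (EnumerationPoset G T ≃o EnumerationPoset G T)) := by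
  intro g h hgh
  refine eq_of_smul_eq_smul fun j : T => point_injective (G := G) ?_
  rw [← translation_point, hgh, translation_point]

end PartialOrder

theorem exists_strictMono_orderIso_apply_stage [LinearOrder T]
    (Ψ : EnumerationPoset G T ≃o EnumerationPoset G T) (g : G) :
    ∃ (h : G) (l : T → T), StrictMono l ∧ ∀ i, Ψ (stage g i) = stage h (l i) := by
  choose c l hΨ using exists_orderIso_apply_stage Ψ g
  have hlt {i k : T} (hik : i < k) : c i = c k ∧ l i < l k := by
    rw [← stage_lt_stage, ← hΨ, ← hΨ, Ψ.lt_iff_lt, stage_lt_stage]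
    exact ⟨rfl, hik⟩
  have hconst (i k : T) : c i = c k := by
    rcases lt_trichotomy i k with hik | rfl | hki
    exacts [(hlt hik).1, rfl, (hlt hki).1.symm]
  obtain ⟨h, hh⟩ : ∃ h, ∀ i, c i = h := by
    rcases isEmpty_or_nonempty T with _ | ⟨⟨i₀⟩⟩
    exacts [⟨1, isEmptyElim⟩, ⟨c i₀, fun i => hconst i i₀⟩]
  exact ⟨h, l, fun _ _ hik => (hlt hik).2, fun i => hh i ▸ hΨ i⟩

section WellOrder

variable [LinearOrder T] [WellFoundedLT T]

theorem exists_forall_orderIso_apply_stage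
    (Ψ : EnumerationPoset G T ≃o EnumerationPoset G T) (g : G) :
    ∃ h : G, ∀ i, Ψ (stage g i) = stage h i := by
  obtain ⟨h, l, hl, hΨ⟩ := exists_strictMono_orderIso_apply_stage Ψ g
  obtain ⟨g', l', hl', hΨ'⟩ := exists_strictMono_orderIso_apply_stage Ψ.symm h
  have hleft (i : T) : l' (l i) = i := by
    have hstage : stage g' (l' (l i)) = stage g i := by rw [← hΨ', ← hΨ, Ψ.symm_apply_apply]
    exact (stage.inj hstage).2
  have hlevel (i : T) : l i = i := le_antisymm (hl'.le_apply.trans_eq (hleft i)) hl.le_apply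
  exact ⟨h, fun i => by rw [hΨ, hlevel]⟩

variable [FaithfulSMul G T]

theorem translation_surjective :
    Function.Surjective (translation : G →* (EnumerationPoset G T ≃o EnumerationPoset G T)) := by
  intro Ψ
  choose φ hφ using exists_forall_orderIso_apply_stage Ψ
  have hpoint (j : T) : Ψ (point j) = point (φ 1 • j) := by
    simpa only [one_smul] using orderIso_apply_point_smul (hφ 1) j
  have hmul (g : G) : φ 1 * g = φ g := by
    refine eq_of_smul_eq_smul fun j : T => point_injective (G := G) ?_
    rw [mul_smul, ← hpoint, orderIso_apply_point_smul (hφ g)]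
  refine ⟨φ 1, OrderIso.ext (funext ?_)⟩
  rintro (j | ⟨g, i⟩)
  · rw [translation_point, hpoint]
  · rw [translation_stage, hφ, hmul]

/-- `translation` as an isomorphism from `G` onto the full automorphism group; its inverse is the
restriction of automorphisms to `T`. -/
noncomputable def translationEquiv : G ≃* (EnumerationPoset G T ≃o EnumerationPoset G T) :=
  MulEquiv.ofBijective translation ⟨translation_injective, translation_surjective⟩

theorem orderIso_apply_point (Ψ : EnumerationPoset G T ≃o EnumerationPoset G T) (j : T) :
    Ψ (point j) = point (translationEquiv.symm Ψ • j) := by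
  conv_lhs => rw [← translationEquiv.apply_symm_apply Ψ]
  exact translation_point _ j

end WellOrder

end EnumerationPoset

theorem exists_order_representation_general (G : Type u) (T : Type v) [Group G] [MulAction G T]
    [FaithfulSMul G T] :
    ∃ (U : Type (max u v)) (_ : PartialOrder U), (Finite T → Finite U) ∧
      ∃ ι : T ↪ U, (∀ Ψ : U ≃o U, Ψ '' range ι = range ι) ∧
        ∃ f : (U ≃o U) ≃* G, ∀ Ψ j, Ψ (ι j) = ι (f Ψ • j) := by
  obtain ⟨_, _⟩ := exists_wellFoundedLT T
  refine ⟨EnumerationPoset G T, inferInstance, fun _ => ?_,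
    ⟨EnumerationPoset.point, EnumerationPoset.point_injective⟩,
    EnumerationPoset.orderIso_image_range_point, EnumerationPoset.translationEquiv.symm,
    EnumerationPoset.orderIso_apply_point⟩
  have : Finite G := Finite.of_injective (MulAction.toPerm : G → Equiv.Perm T)
    MulAction.toPerm_injective
  infer_instance

/-- For every subgroup `G` of the symmetric group on `T = {1,…,n}` there
is a finite partially ordered set `U` containing (an embedded copy of) `T` such that every
order-automorphism of `U` maps `T` onto itself and the restriction map `Ψ ↦ Ψ|_T` is a
group isomorphism from `Aut(U)` onto `G`; hence the action of `Aut(U)` on `T` is exactly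
the permutation group `G`. -/
theorem exists_order_representation (n : ℕ) (hn : 1 ≤ n)
    (G : Subgroup (Equiv.Perm (Fin n))) :
    ∃ (U : Type) (le : U → U → Prop), IsPartialOrder U le ∧ Finite U ∧
      ∃ ι : Fin n ↪ U,
        (∀ Ψ : le ≃r le, (⇑Ψ) '' (Set.range ι) = Set.range ι) ∧
        ∃ f : (le ≃r le) → G,
          (∀ (Ψ : le ≃r le) (j : Fin n), Ψ (ι j) = ι ((f Ψ : Equiv.Perm (Fin n)) j)) ∧
          (∀ Ψ Φ : le ≃r le, f (Ψ.trans Φ) = f Φ * f Ψ) ∧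
          Function.Bijective f := by
  obtain ⟨U, _, hfin, ι, hι, f, hf⟩ := exists_order_representation_general G (Fin n)
  exact ⟨U, (· ≤ ·), inferInstance, hfin inferInstance, ι, hι, f, hf, fun Ψ Φ => map_mul f Φ Ψ,
    f.bijective⟩
end

section
/- Let G be a subgroup of S_n with block partition 𝓑, and consider the ordered set U_{G⋌𝓑}. For every μ ∈ ⋃_{B∈𝓑} G|_B and every j ∈ dom(μ), the element (j,μ) is the unique upper cover of u_j lying in D^μ; moreover, any two elements (a,μ) and (b,μ) of the same set D^μ have the same set of lower covers in G, namely {θ ∈ G : θ|_{dom(μ)} = μ}. -/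
section GeneratedOrder

open Relation

variable {α β : Type*} {r : α → α → Prop}

theorem rel_of_covBy_of_le_iff_reflTransGen [PartialOrder α]
    (hle : ∀ x y, x ≤ y ↔ ReflTransGen r x y) {x y : α} (hxy : x ⋖ y) : r x y := by
  have hchain : ReflTransGen r x y := (hle x y).1 hxy.le
  induction hchain with
  | refl => exact absurd hxy.lt (lt_irrefl x)
  | @tail c y hxc hcy ih =>
    rcases hxy.eq_or_eq ((hle x c).2 hxc) ((hle c y).2 (.single hcy)) with rfl | rfl
    · exact hcy
    · exact ih hxy

theorem strictMono_of_le_iff_reflTransGen [Preorder α] [Preorder β]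
    (hle : ∀ x y, x ≤ y ↔ ReflTransGen r x y) {f : α → β}
    (hf : ∀ x y, r x y → f x < f y) : StrictMono f := by
  intro x y hxy
  have hchain : TransGen r x y :=
    (reflTransGen_iff_eq_or_transGen.1 ((hle x y).1 hxy.le)).resolve_left hxy.ne'
  simpa only [transGen_eq_self] using hchain.lift f hf

theorem covBy_iff_rel_of_graded [PartialOrder α] [Preorder β]
    (hle : ∀ x y, x ≤ y ↔ ReflTransGen r x y) {f : α → β}
    (hf : ∀ x y, r x y → f x ⋖ f y) {x y : α} : x ⋖ y ↔ r x y := by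
  refine ⟨rel_of_covBy_of_le_iff_reflTransGen hle, fun hxy => ?_⟩
  have hmono : StrictMono f :=
    strictMono_of_le_iff_reflTransGen hle fun x y h => (hf x y h).lt
  have hne : x ≠ y := fun h => (hf x y hxy).ne (congrArg f h)
  exact ⟨((hle x y).2 (.single hxy)).lt_of_ne hne,
    fun z hxz hzy => (hf x y hxy).2 (hmono hxz) (hmono hzy)⟩

end GeneratedOrder

section Covers

variable {n : ℕ} {G : Subgroup (Equiv.Perm (Fin n))} {𝓑 : Set (Set (Fin n))}

/-- The grading of `U_{G⋌𝓑}`. Unlike `UPt.rank`, it puts `G` on level `1` and so rises by exactly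
one along every generating comparability. -/
def UPt.level : UPt n G 𝓑 → ℕ
  | .low _ => 0
  | .up _ => 1
  | .grp _ => 1
  | .cell _ _ => 2
  | .pt _ => 3

theorem UStep.level_covBy {x y : UPt n G 𝓑} (h : UStep n G 𝓑 x y) : x.level ⋖ y.level := by
  cases h <;> exact Order.covBy_add_one _

theorem UPt.covBy_iff_uStep {x y : UPt n G 𝓑} : x ⋖ y ↔ UStep n G 𝓑 x y :=
  covBy_iff_rel_of_graded (r := UStep n G 𝓑) (f := UPt.level) (fun _ _ => Iff.rfl)
    fun _ _ => UStep.level_covBy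

theorem UPt.up_covBy_cell_iff {i : Fin n} {μ : Restr n G 𝓑} {k : μ.1.1} :
    (UPt.up i : UPt n G 𝓑) ⋖ UPt.cell μ k ↔ k.1 = i := by
  rw [UPt.covBy_iff_uStep]
  refine ⟨fun h => ?_, fun h => h ▸ .up_cell μ k⟩
  cases h with
  | up_cell => rfl

theorem UPt.grp_covBy_cell_iff {θ : G} {μ : Restr n G 𝓑} {a : μ.1.1} :
    (UPt.grp θ : UPt n G 𝓑) ⋖ UPt.cell μ a ↔
      ∀ x : μ.1.1, μ.1.2 x = (θ : Equiv.Perm (Fin n)) x.1 := by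
  rw [UPt.covBy_iff_uStep]
  refine ⟨fun h => ?_, .grp_cell θ μ a⟩
  cases h with
  | grp_cell _ _ _ hθ => exact hθ

end Covers

theorem covers_in_U_general (n : ℕ) (G : Subgroup (Equiv.Perm (Fin n))) (𝓑 : Set (Set (Fin n))) :
    (∀ (μ : Restr n G 𝓑) (j : μ.1.1),
      (UPt.up j.1 : UPt n G 𝓑) ⋖ UPt.cell μ j ∧
      ∀ k : μ.1.1, (UPt.up j.1 : UPt n G 𝓑) ⋖ UPt.cell μ k → k = j) ∧
    (∀ (μ : Restr n G 𝓑) (a : μ.1.1) (θ : G),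
      ((UPt.grp θ : UPt n G 𝓑) ⋖ UPt.cell μ a ↔
        ∀ x : μ.1.1, μ.1.2 x = (θ : Equiv.Perm (Fin n)) x.1)) ∧
    (∀ (μ : Restr n G 𝓑) (a b : μ.1.1) (θ : G),
      ((UPt.grp θ : UPt n G 𝓑) ⋖ UPt.cell μ a ↔
        (UPt.grp θ : UPt n G 𝓑) ⋖ UPt.cell μ b)) := by
  refine ⟨fun μ j => ⟨?_, fun k hk => ?_⟩, fun μ a θ => ?_, fun μ a b θ => ?_⟩
  · exact UPt.up_covBy_cell_iff.2 rfl
  · exact Subtype.ext (UPt.up_covBy_cell_iff.1 hk)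
  · exact UPt.grp_covBy_cell_iff
  · exact UPt.grp_covBy_cell_iff.trans UPt.grp_covBy_cell_iff.symm

/-- In `U_{G⋌𝓑}`, for every `μ` and every `j ∈ dom(μ)`, the element
`(j,μ)` is the unique upper cover of `u_j` lying in `D^μ`; moreover any two elements of the
same `D^μ` have the same lower covers in `G`, namely `{θ ∈ G : θ|_{dom(μ)} = μ}`. -/
theorem covers_in_U (n : ℕ) (hn : 1 ≤ n) (G : Subgroup (Equiv.Perm (Fin n)))
    (P : BlockPartition n G) :
    (∀ (μ : Restr n G P.blocks) (j : μ.1.1),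
      (UPt.up j.1 : UPt n G P.blocks) ⋖ UPt.cell μ j ∧
      ∀ k : μ.1.1, (UPt.up j.1 : UPt n G P.blocks) ⋖ UPt.cell μ k → k = j) ∧
    (∀ (μ : Restr n G P.blocks) (a : μ.1.1) (θ : G),
      ((UPt.grp θ : UPt n G P.blocks) ⋖ UPt.cell μ a ↔
        ∀ x : μ.1.1, μ.1.2 x = (θ : Equiv.Perm (Fin n)) x.1)) ∧
    (∀ (μ : Restr n G P.blocks) (a b : μ.1.1) (θ : G),
      ((UPt.grp θ : UPt n G P.blocks) ⋖ UPt.cell μ a ↔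
        (UPt.grp θ : UPt n G P.blocks) ⋖ UPt.cell μ b)) := by
  exact covers_in_U_general n G P.blocks
end
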